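/- Let n ≥ 1 and let q ∈ ℂ be nonzero and not a root of unity. Then the trivial left 𝔥_n(q)-module ℂ_ε has projective dimension exactly 3n: it admits a projective resolution of length 3n, but admits no projective resolution of length 3n − 1. -/

import Mathlib

noncomputable section

open scoped BigOperators

namespace QHeisenberg

/-- Index type for the `3n` generators: `x`-, `y`-, and `z`-variables. -/
abbrev GenIdx (n : ℕ) := Fin n ⊕ (Fin n ⊕ Fin n)

/-- The `x_i` generator in the free algebra. -/
def fX (n : ℕ) (i : Fin n) : FreeAlgebra ℂ (GenIdx n) := FreeAlgebra.ι ℂ (Sum.inl i)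

/-- The `y_i` generator in the free algebra. -/
def fY (n : ℕ) (i : Fin n) : FreeAlgebra ℂ (GenIdx n) := FreeAlgebra.ι ℂ (Sum.inr (Sum.inl i))

/-- The `z_i` generator in the free algebra. -/
def fZ (n : ℕ) (i : Fin n) : FreeAlgebra ℂ (GenIdx n) := FreeAlgebra.ι ℂ (Sum.inr (Sum.inr i))

/-- The defining relations of the q-Heisenberg algebra `𝔥_n(q)`. -/
inductive Rel (n : ℕ) (q : ℂ) :
    FreeAlgebra ℂ (GenIdx n) → FreeAlgebra ℂ (GenIdx n) → Prop
  | xx (i j : Fin n) : Rel n q (fX n i * fX n j) (fX n j * fX n i)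
  | yy (i j : Fin n) : Rel n q (fY n i * fY n j) (fY n j * fY n i)
  | zz (i j : Fin n) : Rel n q (fZ n i * fZ n j) (fZ n j * fZ n i)
  | xz (i : Fin n) : Rel n q (fX n i * fZ n i) (q • (fZ n i * fX n i))
  | yz (i : Fin n) : Rel n q (fY n i * fZ n i) (q⁻¹ • (fZ n i * fY n i))
  | xy (i : Fin n) : Rel n q (fX n i * fY n i) (q⁻¹ • (fY n i * fX n i) + fZ n i)
  | xyne (i j : Fin n) : i ≠ j → Rel n q (fX n i * fY n j) (fY n j * fX n i)
  | xzne (i j : Fin n) : i ≠ j → Rel n q (fX n i * fZ n j) (fZ n j * fX n i)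
  | yzne (i j : Fin n) : i ≠ j → Rel n q (fY n i * fZ n j) (fZ n j * fY n i)

/-- The q-Heisenberg algebra `𝔥_n(q)`. -/
abbrev H (n : ℕ) (q : ℂ) := RingQuot (Rel n q)

/-- The generator `x_i` of `𝔥_n(q)`. -/
def X (n : ℕ) (q : ℂ) (i : Fin n) : H n q := RingQuot.mkAlgHom ℂ (Rel n q) (fX n i)

/-- The generator `y_i` of `𝔥_n(q)`. -/
def Y (n : ℕ) (q : ℂ) (i : Fin n) : H n q := RingQuot.mkAlgHom ℂ (Rel n q) (fY n i)

/-- The generator `z_i` of `𝔥_n(q)`. -/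
def Z (n : ℕ) (q : ℂ) (i : Fin n) : H n q := RingQuot.mkAlgHom ℂ (Rel n q) (fZ n i)

/-- `q` is not a root of unity: `q ^ k ≠ 1` for every `k ≥ 1`. -/
def NotRootOfUnity (q : ℂ) : Prop := ∀ k : ℕ, 1 ≤ k → q ^ k ≠ 1

end QHeisenberg

namespace QHeisenberg

open CategoryTheory

/-- A module `M` admits a projective resolution of length at most `d`:
there is a projective resolution whose terms vanish in degrees above `d`. -/
def HasProjResLengthLE {R : Type} [Ring R] (M : ModuleCat R) (d : ℕ) : Prop :=
  ∃ P : ProjectiveResolution M, ∀ k : ℕ, d < k → Limits.IsZero (P.complex.X k)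

/-- The augmentation homomorphism `ε : 𝔥_n(q) → ℂ` sending every generator to `0`. -/
def eps (n : ℕ) (q : ℂ) : H n q →ₐ[ℂ] ℂ :=
  RingQuot.liftAlgHom ℂ ⟨FreeAlgebra.lift ℂ (fun _ => (0 : ℂ)), by
    intro a b h
    induction h <;> simp [fX, fY, fZ]⟩

/-- The trivial left `𝔥_n(q)`-module `ℂ_ε`: the complex numbers, with every generator
acting by `0` (restriction of scalars along `ε`). -/
def trivMod (n : ℕ) (q : ℂ) : ModuleCat (H n q) :=
  (ModuleCat.restrictScalars (eps n q).toRingHom).obj (ModuleCat.of ℂ ℂ)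

/-! Order the generators by blocks, each block as `z_i, x_i, y_i`. The ordered monomials form a
basis of `𝔥_n(q)`: for one block the operators on the free module on these monomials satisfy the
defining relations, and `𝔥_n(q)` is the `n`-fold tensor power of `𝔥₁(q)`. Since the generators
commute up to scalars and up to earlier generators, the left ideal `I` spanned by an initial segment
is spanned by basis monomials, and right multiplication by the next generator `g` induces an
injective endomorphism of `𝔥_n(q) ⧸ I` with cokernel the quotient for the next initial segment. Each
of the `3n` steps therefore raises the projective dimension by at most one. It raises it by exactly
one, because every generator acts by zero on `Ext^k(𝔥_n(q) ⧸ I, ℂ_ε)` in the top degree `k`, so that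
the connecting homomorphism into the next `Ext` group is injective. -/

section ProjectiveDimension

open Limits Abelian

universe v u w

variable {C : Type u} [Category.{v} C] [Abelian C]

lemma quasiIso_toSingle₀ {D : ChainComplex C ℕ} {M : C} (p : D.X 0 ⟶ M) (hp : D.d 1 0 ≫ p = 0)
    (hepi : Epi p) (h₀ : (ShortComplex.mk _ p hp).Exact) (h : ∀ n, D.ExactAt (n + 1)) :
    QuasiIso ((D.toSingle₀Equiv M).symm ⟨p, hp⟩) where
  quasiIsoAt := by
    rintro (_ | n)
    · rw [ChainComplex.quasiIsoAt₀_iff,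
        ShortComplex.quasiIso_iff_of_zeros' _ (D.shape _ _ (by simp)) rfl rfl]
      refine (ShortComplex.exact_and_epi_g_iff_of_iso ?_).2 ⟨h₀, hepi⟩
      exact ShortComplex.isoMk (Iso.refl _) (Iso.refl _) (Iso.refl _)
        (by simp [HomologicalComplex.shortComplexFunctor'])
        (by simp [HomologicalComplex.shortComplexFunctor'])
    · rw [quasiIsoAt_iff_exactAt' _ _ (ChainComplex.exactAt_succ_single_obj M n)]
      exact h n

lemma exact_comp_of_epi {A B D E : C} (a : A ⟶ B) [Epi a] {f : B ⟶ D} {g : D ⟶ E} (w : f ≫ g = 0)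
    (hS : (ShortComplex.mk f g w).Exact) :
    (ShortComplex.mk (a ≫ f) g (by rw [Category.assoc, w, comp_zero])).Exact :=
  let φ : ShortComplex.mk (a ≫ f) g (by rw [Category.assoc, w, comp_zero]) ⟶
    ShortComplex.mk f g w := { τ₁ := a, τ₂ := 𝟙 _, τ₃ := 𝟙 _ }
  have : Epi φ.τ₁ := ‹Epi a›
  have : IsIso φ.τ₂ := inferInstanceAs (IsIso (𝟙 _))
  have : Mono φ.τ₃ := inferInstanceAs (Mono (𝟙 _))
  (ShortComplex.exact_iff_of_epi_of_isIso_of_mono φ).2 hS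

lemma exact_comp_of_mono {A B D E : C} {f : A ⟶ B} {g : B ⟶ D} (b : D ⟶ E) [Mono b] (w : f ≫ g = 0)
    (hS : (ShortComplex.mk f g w).Exact) :
    (ShortComplex.mk f (g ≫ b) (by rw [← Category.assoc, w, zero_comp])).Exact :=
  let φ : ShortComplex.mk f g w ⟶
    ShortComplex.mk f (g ≫ b) (by rw [← Category.assoc, w, zero_comp]) :=
    { τ₁ := 𝟙 _, τ₂ := 𝟙 _, τ₃ := b }
  have : Epi φ.τ₁ := inferInstanceAs (Epi (𝟙 _))
  have : IsIso φ.τ₂ := inferInstanceAs (IsIso (𝟙 _))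
  have : Mono φ.τ₃ := ‹Mono b›
  (ShortComplex.exact_iff_of_epi_of_isIso_of_mono φ).1 hS

/-- The augmentation `Q₀ → M` of a projective resolution `Q` of `M`. -/
def augmentation {M : C} (Q : ProjectiveResolution M) : Q.complex.X 0 ⟶ M :=
  Q.π.f 0

instance {M : C} (Q : ProjectiveResolution M) : Epi (augmentation Q) :=
  inferInstanceAs (Epi (Q.π.f 0))

lemma d_comp_augmentation {M : C} (Q : ProjectiveResolution M) :
    Q.complex.d 1 0 ≫ augmentation Q = 0 :=
  Q.complex_d_comp_π_f_zero

lemma exact_augmentation {M : C} (Q : ProjectiveResolution M) :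
    (ShortComplex.mk _ _ (d_comp_augmentation Q)).Exact :=
  Q.exact₀

/-- The complex `⋯ → Q₁ → Q₀ → P` obtained by splicing a projective resolution `Q` of `K` with a
morphism `i : K ⟶ P`. -/
def spliceComplex {K P : C} (Q : ProjectiveResolution K) (i : K ⟶ P) : ChainComplex C ℕ :=
  Q.complex.augment (augmentation Q ≫ i) (by rw [← Category.assoc, d_comp_augmentation, zero_comp])

lemma spliceComplex_exactAt_succ {K P : C} (Q : ProjectiveResolution K) (i : K ⟶ P) [Mono i]
    (n : ℕ) : (spliceComplex Q i).ExactAt (n + 1) := by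
  rw [HomologicalComplex.exactAt_iff' _ (n + 1 + 1) (n + 1) n (by simp) (by simp)]
  match n with
  | 0 => exact exact_comp_of_mono i _ (exact_augmentation Q)
  | n + 1 => exact Q.exact_succ n

lemma spliceComplex_d_comp {K P M : C} (Q : ProjectiveResolution K) {i : K ⟶ P} {p : P ⟶ M}
    (w : i ≫ p = 0) : (spliceComplex Q i).d 1 0 ≫ p = 0 := by
  change (augmentation Q ≫ i) ≫ p = 0
  rw [Category.assoc, w, comp_zero]

/-- The projective resolution `⋯ → Q₁ → Q₀ → P` of `M` obtained from a projective resolution `Q`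
of `K` and a short exact sequence `0 → K → P → M → 0` with `P` projective. -/
def spliceResolution {K P M : C} {i : K ⟶ P} {p : P ⟶ M} {w : i ≫ p = 0}
    (hS : (ShortComplex.mk i p w).ShortExact) [Projective P] (Q : ProjectiveResolution K) :
    ProjectiveResolution M :=
  have : Mono i := hS.mono_f
  { complex := spliceComplex Q i
    projective
      | 0 => ‹Projective P›
      | n + 1 => Q.projective n
    π := ((spliceComplex Q i).toSingle₀Equiv M).symm ⟨p, spliceComplex_d_comp Q w⟩
    quasiIso := quasiIso_toSingle₀ (D := spliceComplex Q i) p (spliceComplex_d_comp Q w)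
      hS.epi_g (exact_comp_of_epi (augmentation Q) w hS.exact) (spliceComplex_exactAt_succ Q i) }

lemma hasProjectiveDimensionLE_of_resolution [HasExt.{w} C] {M : C} (P : ProjectiveResolution M)
    {d : ℕ} (hP : ∀ k, d < k → IsZero (P.complex.X k)) : HasProjectiveDimensionLE M d :=
  HasProjectiveDimensionLT.mk fun k hk T e ↦ by
    obtain ⟨f, hf, rfl⟩ := P.extMk_surjective e (k + 1) rfl
    obtain rfl : f = 0 := (hP k hk).eq_of_src _ _
    simp

lemma exists_resolution_of_hasProjectiveDimensionLE [EnoughProjectives C] {M : C} {d : ℕ}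
    (hM : HasProjectiveDimensionLE M d) :
    ∃ P : ProjectiveResolution M, ∀ k, d < k → IsZero (P.complex.X k) := by
  induction d generalizing M with
  | zero =>
    have : Projective M := projective_iff_hasProjectiveDimensionLT_one.2 hM
    exact ⟨.self M, fun k hk ↦ HomologicalComplex.isZero_single_obj_X _ _ _ _ hk.ne'⟩
  | succ d ih =>
    have hS : (ShortComplex.mk _ _ (kernel.condition (Projective.π M))).ShortExact :=
      { exact := ShortComplex.exact_of_f_is_kernel _ (kernelIsKernel _) }
    have hK := (hS.hasProjectiveDimensionLT_X₃_iff d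
      (inferInstanceAs (Projective (Projective.over M)))).1 hM
    obtain ⟨Q, hQ⟩ := ih hK
    refine ⟨spliceResolution hS Q, ?_⟩
    rintro (_ | k) hk
    · omega
    · exact hQ k (by omega)

lemma hasProjResLengthLE_iff {R : Type} [Ring R] (M : ModuleCat.{0} R) (d : ℕ) :
    HasProjResLengthLE M d ↔ projectiveDimension M ≤ d := by
  rw [projectiveDimension_le_iff]
  exact ⟨fun ⟨P, hP⟩ ↦ hasProjectiveDimensionLE_of_resolution P hP,
    exists_resolution_of_hasProjectiveDimensionLE⟩

variable {S : ShortComplex C} [HasExt.{w} C]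

lemma exists_ext_ne_zero_of_shortExact (hS : S.ShortExact) {T : C} {k : ℕ}
    (hf : ∀ e : Ext S.X₂ T k, (Ext.mk₀ S.f).comp e (zero_add k) = 0)
    (hne : ∃ e : Ext S.X₁ T k, e ≠ 0) : ∃ e : Ext S.X₃ T (k + 1), e ≠ 0 := by
  obtain ⟨e, he⟩ := hne
  refine ⟨hS.extClass.comp e (add_comm 1 k), fun h ↦ he ?_⟩
  obtain ⟨e', rfl⟩ := Ext.contravariant_sequence_exact₁ hS T e (add_comm 1 k) h
  exact hf e'

lemma mk₀_τ₃_comp_eq_zero {S' : ShortComplex C} (hS : S.ShortExact) (hS' : S'.ShortExact)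
    (φ : S ⟶ S') {T : C} {k : ℕ} (hX₂ : ∀ e : Ext S'.X₂ T (k + 1), e = 0)
    (hφ : ∀ e : Ext S'.X₁ T k, (Ext.mk₀ φ.τ₁).comp e (zero_add k) = 0)
    (e : Ext S'.X₃ T (k + 1)) : (Ext.mk₀ φ.τ₃).comp e (zero_add (k + 1)) = 0 := by
  obtain ⟨e, rfl⟩ := Ext.contravariant_sequence_exact₃ hS' T e (hX₂ _) (add_comm 1 k)
  rw [← Ext.comp_assoc (a₁₂ := 1) _ _ _ (by lia) (by lia) (by lia),
    ← ShortComplex.ShortExact.extClass_naturality hS hS' φ,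
    Ext.comp_assoc (a₂₃ := k) _ _ _ (by lia) (by lia) (by lia), hφ, Ext.comp_zero]

end ProjectiveDimension

section SkewRegular

open Abelian

universe u

variable (K : Type*) {A : Type u} {ι : Type*} [CommRing K] [Ring A] [Algebra K A]

/-- The elements `x` of a `K`-algebra commute up to scalars and up to the left ideal generated by
the earlier ones. -/
def SkewCommute [Preorder ι] (x : ι → A) : Prop :=
  ∀ g h, ∃ c : K, x g * x h - c • (x h * x g) ∈ Ideal.span (x '' Set.Iio g)

/-- Skew-commuting elements `x` such that right multiplication by each `x g` is injective modulo the
left ideal generated by the earlier ones: a noncommutative analogue of a regular sequence. -/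
structure IsSkewRegular [Preorder ι] (x : ι → A) : Prop where
  skewCommute : SkewCommute K x
  mem_of_mul_mem : ∀ g a, a * x g ∈ Ideal.span (x '' Set.Iio g) → a ∈ Ideal.span (x '' Set.Iio g)

variable {K}

lemma SkewCommute.mul_smul_mem_span_image [Preorder ι] {x : ι → A} (hx : SkewCommute K x)
    {s : Set ι} (hs : IsLowerSet s) (h : ι) (c : K) :
    ∀ a ∈ Ideal.span (x '' s), a * c • x h ∈ Ideal.span (x '' s) := by
  intro a ha
  induction ha using Submodule.span_induction with
  | mem a ha =>
    obtain ⟨g, hg, rfl⟩ := ha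
    obtain ⟨c', hc'⟩ := hx g h
    have hmem : x g * x h ∈ Ideal.span (x '' s) := by
      have hlt : x '' Set.Iio g ⊆ x '' s := Set.image_mono fun i hi ↦ hs (le_of_lt hi) hg
      rw [← sub_add_cancel (x g * x h) (c' • (x h * x g))]
      refine add_mem (Ideal.span_mono hlt hc') ?_
      rw [← smul_mul_assoc]
      exact Ideal.mul_mem_left _ _ (Ideal.subset_span ⟨g, hg, rfl⟩)
    rw [mul_smul_comm]
    exact Submodule.smul_of_tower_mem _ c hmem
  | zero => simp
  | add a b _ _ ha hb => rw [add_mul]; exact add_mem ha hb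
  | smul r a _ ha => rw [smul_eq_mul, mul_assoc]; exact Ideal.mul_mem_left _ _ ha

/-- Right multiplication by `b` on the left module `A ⧸ I`, when `I * b ⊆ I`. -/
def quotMulRight (I : Ideal A) (b : A) (hb : ∀ a ∈ I, a * b ∈ I) : (A ⧸ I) →ₗ[A] A ⧸ I :=
  Submodule.mapQ I I (LinearMap.toSpanSingleton A A b) hb

lemma quotMulRight_mk {I : Ideal A} {b : A} (hb : ∀ a ∈ I, a * b ∈ I) (a : A) :
    quotMulRight I b hb (Submodule.Quotient.mk a) = Submodule.Quotient.mk (a * b) :=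
  rfl

lemma quotMulRight_injective {I : Ideal A} {b : A} (hb : ∀ a ∈ I, a * b ∈ I)
    (reg : ∀ a, a * b ∈ I → a ∈ I) : Function.Injective (quotMulRight I b hb) := by
  refine (injective_iff_map_eq_zero _).2 fun m hm ↦ ?_
  obtain ⟨a, rfl⟩ := Submodule.Quotient.mk_surjective I m
  rw [quotMulRight_mk, Submodule.Quotient.mk_eq_zero] at hm
  exact (Submodule.Quotient.mk_eq_zero I).2 (reg a hm)

lemma exact_quotMulRight_factor {I J : Ideal A} {b : A} (hb : ∀ a ∈ I, a * b ∈ I)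
    (hIJ : I ≤ J) (hJ : ∀ a, a ∈ J ↔ ∃ c, a + c * b ∈ I) :
    Function.Exact (quotMulRight I b hb) (Submodule.factor hIJ) := by
  intro m
  obtain ⟨a, rfl⟩ := Submodule.Quotient.mk_surjective I m
  change Submodule.Quotient.mk a = 0 ↔ _
  rw [Submodule.Quotient.mk_eq_zero, hJ]
  constructor
  · rintro ⟨c, hc⟩
    refine ⟨Submodule.Quotient.mk (-c), ((Submodule.Quotient.eq I).2 ?_).symm⟩
    simpa using hc
  · rintro ⟨c, hc⟩
    obtain ⟨c, rfl⟩ := Submodule.Quotient.mk_surjective I c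
    exact ⟨-c, by simpa [sub_eq_add_neg] using (Submodule.Quotient.eq I).1 hc.symm⟩

/-- The left module `A ⧸ A (x '' s)`. -/
abbrev quotSpan (x : ι → A) (s : Set ι) : ModuleCat.{u} A :=
  ModuleCat.of A (A ⧸ Ideal.span (x '' s))

variable (K) in
/-- The inductive statement on the quotients of `A` by initial segments of a skew-regular sequence:
the projective dimension is at most `k`, the group `Ext ^ k (-, T)` is nonzero, and it is
annihilated by right multiplication by every generator. -/
structure HasKilledExt (x : ι → A) (T : ModuleCat.{u} A) (s : Set ι) (k : ℕ) : Prop where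
  projectiveDimension_le : HasProjectiveDimensionLE (quotSpan x s) k
  exists_ext_ne_zero : ∃ e : Ext (quotSpan x s) T k, e ≠ 0
  quotMulRight_comp : ∀ h (c : K)
    (hs : ∀ a ∈ Ideal.span (x '' s), a * c • x h ∈ Ideal.span (x '' s))
    (e : Ext (quotSpan x s) T k),
    (Ext.mk₀ (ModuleCat.ofHom (quotMulRight _ (c • x h) hs))).comp e (zero_add k) = 0

variable {x : ι → A} {T : ModuleCat.{u} A}

lemma hasKilledExt_empty [Nontrivial T] (hT : ∀ h (t : T), x h • t = 0) :
    HasKilledExt K x T ∅ 0 := by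
  have hbot : Ideal.span (x '' ∅) = ⊥ := by rw [Set.image_empty, Ideal.span_empty]
  constructor
  · have : Module.Projective A (A ⧸ Ideal.span (x '' ∅)) :=
      .of_equiv (Submodule.quotEquivOfEqBot _ hbot).symm
    exact projective_iff_hasProjectiveDimensionLT_one.1
      ((IsProjective.iff_projective _).1 this)
  · obtain ⟨t, ht⟩ := exists_ne (0 : T)
    let f : quotSpan x ∅ ⟶ T := ModuleCat.ofHom
      (Submodule.liftQ _ (LinearMap.toSpanSingleton A T t) (hbot ▸ bot_le))
    have hf : f (Submodule.Quotient.mk 1) = t := one_smul A t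
    refine ⟨Ext.mk₀ f, fun h ↦ ht ?_⟩
    rw [Ext.mk₀_eq_zero_iff] at h
    rw [← hf, h]
    rfl
  · intro h c hs e
    obtain ⟨f, rfl⟩ := (Ext.mk₀_bijective _ _).2 e
    rw [Ext.mk₀_comp_mk₀, Ext.mk₀_eq_zero_iff]
    refine ModuleCat.hom_ext (Submodule.linearMap_qext _ (LinearMap.ext_ring ?_))
    change f (Submodule.Quotient.mk (1 * c • x h)) = 0
    have : Submodule.Quotient.mk (1 * c • x h) =
      (c • x h) • (Submodule.Quotient.mk 1 : A ⧸ Ideal.span (x '' ∅)) := by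
      rw [one_mul, ← Submodule.Quotient.mk_smul, smul_eq_mul, mul_one]
    rw [this]
    refine (f.hom.map_smul _ _).trans ?_
    rw [← mul_one (x h), ← mul_smul_comm, mul_smul]
    exact hT h _

/-- For `I * b ⊆ I`, the sequence `A ⧸ I → A ⧸ I → A ⧸ J` whose first map is right multiplication
by `b ∈ J`. -/
def quotMulRightSequence {I J : Ideal A} {b : A} (hb : ∀ a ∈ I, a * b ∈ I) (hIJ : I ≤ J)
    (hJ : ∀ a, a ∈ J ↔ ∃ c, a + c * b ∈ I) : ShortComplex (ModuleCat.{u} A) :=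
  ModuleCat.shortComplexOfCompEqZero (quotMulRight I b hb) (Submodule.factor hIJ)
    (exact_quotMulRight_factor hb hIJ hJ).linearMap_comp_eq_zero

lemma quotMulRightSequence_shortExact {I J : Ideal A} {b : A} (hb : ∀ a ∈ I, a * b ∈ I)
    (hIJ : I ≤ J) (hJ : ∀ a, a ∈ J ↔ ∃ c, a + c * b ∈ I) (reg : ∀ a, a * b ∈ I → a ∈ I) :
    (quotMulRightSequence hb hIJ hJ).ShortExact :=
  ModuleCat.shortComplex_shortExact _ (exact_quotMulRight_factor hb hIJ hJ)
    (quotMulRight_injective hb reg) (Submodule.factor_surjective hIJ)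

/-- The endomorphism of `quotMulRightSequence` given on its last two terms by right multiplication
by `d`, and on the first by right multiplication by `d'`, where `b d ≡ d' b` modulo `I`. -/
def quotMulRightSequenceEnd {I J : Ideal A} {b : A} (hb : ∀ a ∈ I, a * b ∈ I) (hIJ : I ≤ J)
    (hJ : ∀ a, a ∈ J ↔ ∃ c, a + c * b ∈ I) {d d' : A} (hdI : ∀ a ∈ I, a * d ∈ I)
    (hdJ : ∀ a ∈ J, a * d ∈ J) (hd' : ∀ a ∈ I, a * d' ∈ I) (hbd : b * d - d' * b ∈ I) :
    quotMulRightSequence hb hIJ hJ ⟶ quotMulRightSequence hb hIJ hJ where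
  τ₁ := ModuleCat.ofHom (quotMulRight I d' hd')
  τ₂ := ModuleCat.ofHom (quotMulRight I d hdI)
  τ₃ := ModuleCat.ofHom (quotMulRight J d hdJ)
  comm₁₂ := by
    ext m
    obtain ⟨a, rfl⟩ := Submodule.Quotient.mk_surjective _ m
    refine ((Submodule.Quotient.eq I).2 ?_).symm
    change a * b * d - a * d' * b ∈ I
    rw [mul_assoc, mul_assoc, ← mul_sub]
    exact I.mul_mem_left a hbd
  comm₂₃ := by
    ext m
    obtain ⟨a, rfl⟩ := Submodule.Quotient.mk_surjective _ m
    rfl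

lemma IsSkewRegular.hasKilledExt_Iic [PartialOrder ι] (hx : IsSkewRegular K x) (g : ι) {k : ℕ}
    (h : HasKilledExt K x T (Set.Iio g) k) : HasKilledExt K x T (Set.Iic g) (k + 1) := by
  have hb (i : ι) (c : K) := hx.skewCommute.mul_smul_mem_span_image (isLowerSet_Iio g) i c
  have hbg := hb g 1
  rw [one_smul] at hbg
  have hIJ : Ideal.span (x '' Set.Iio g) ≤ Ideal.span (x '' Set.Iic g) :=
    Ideal.span_mono (Set.image_mono Set.Iio_subset_Iic_self)
  have hJ (a : A) : a ∈ Ideal.span (x '' Set.Iic g) ↔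
      ∃ c, a + c * x g ∈ Ideal.span (x '' Set.Iio g) := by
    rw [← Set.Iio_insert, Set.image_insert_eq, Ideal.mem_span_insert']
  have hS := quotMulRightSequence_shortExact hbg hIJ hJ (hx.mem_of_mul_mem g)
  have := h.projectiveDimension_le
  constructor
  · exact hS.hasProjectiveDimensionLT_X₃ (k + 1) h.projectiveDimension_le
      (hasProjectiveDimensionLT_of_ge (quotSpan x (Set.Iio g)) (k + 1) (k + 2) (by omega))
  · refine exists_ext_ne_zero_of_shortExact hS (fun e ↦ ?_) h.exists_ext_ne_zero
    have := h.quotMulRight_comp g 1 (hb g 1) e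
    simp_rw [one_smul] at this
    exact this
  · intro i c hs e
    obtain ⟨c', hc'⟩ := hx.skewCommute g i
    have hbd : x g * c • x i - (c * c') • x i * x g ∈ Ideal.span (x '' Set.Iio g) := by
      rw [mul_smul_comm, smul_mul_assoc, mul_smul, ← smul_sub]
      exact Submodule.smul_of_tower_mem _ c hc'
    exact mk₀_τ₃_comp_eq_zero hS hS
      (quotMulRightSequenceEnd hbg hIJ hJ (hb i c) hs (hb i (c * c')) hbd)
      (fun e ↦ Ext.eq_zero_of_hasProjectiveDimensionLT (X := quotSpan x _) e (k + 1) le_rfl)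
      (h.quotMulRight_comp i _ _) e

lemma IsSkewRegular.hasKilledExt [LinearOrder ι] (hx : IsSkewRegular K x) [Nontrivial T]
    (hT : ∀ h (t : T), x h • t = 0) (s : Finset ι) (hs : IsLowerSet (s : Set ι)) :
    HasKilledExt K x T s s.card := by
  induction s using Finset.induction_on_max with
  | empty => simpa using hasKilledExt_empty hT
  | insert g s hlt ih =>
    have hIio : (s : Set ι) = Set.Iio g := by
      ext i
      refine ⟨fun hi ↦ hlt i hi, fun hi ↦ ?_⟩
      have := hs hi.le (Finset.mem_insert_self g s)
      simpa [hi.ne] using this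
    have hIic : ((insert g s : Finset ι) : Set ι) = Set.Iic g := by
      rw [Finset.coe_insert, hIio, Set.Iio_insert]
    rw [hIic, Finset.card_insert_of_notMem fun hg ↦ (hlt g hg).false]
    rw [hIio] at ih
    exact hx.hasKilledExt_Iic g (ih (isLowerSet_Iio g))

theorem IsSkewRegular.projectiveDimension_quotSpan_univ [LinearOrder ι] [Fintype ι]
    (hx : IsSkewRegular K x) [Nontrivial T] (hT : ∀ h (t : T), x h • t = 0) :
    projectiveDimension (quotSpan x Set.univ) = Fintype.card ι := by
  have hmain := hx.hasKilledExt hT Finset.univ (by simp [isLowerSet_univ])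
  rw [Finset.coe_univ, Finset.card_univ] at hmain
  obtain ⟨hle, ⟨e, he⟩, -⟩ := hmain
  refine le_antisymm ((projectiveDimension_le_iff _ _).2 hle)
    ((projectiveDimension_ge_iff _ _).2 fun h ↦ he ?_)
  exact Ext.eq_zero_of_hasProjectiveDimensionLT e _ le_rfl

end SkewRegular

section PBWBasis

open Module

variable {K A ι : Type*} [CommRing K] [Ring A] [Algebra K A]

/-- The basis vectors `b m` are the multiples by `b 0` of the ordered monomials with exponents `m`
in the elements `x`, the factors with smaller index standing to the right. -/
def IsPBWBasis [LinearOrder ι] (b : Basis (ι → ℕ) K A) (x : ι → A) : Prop :=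
  ∀ g m, (∀ h < g, m h = 0) → b (m + Pi.single g 1) = b m * x g

/-- The exponents of the monomials in which a factor with index in `s` occurs. -/
def exponentsMeeting (s : Set ι) : Set (ι → ℕ) :=
  {m | ∃ h ∈ s, m h ≠ 0}

lemma exponentsMeeting_mono {s t : Set ι} (h : s ⊆ t) : exponentsMeeting s ⊆ exponentsMeeting t :=
  fun _ ⟨i, hi, hm⟩ ↦ ⟨i, h hi, hm⟩

lemma add_single_mem_exponentsMeeting_Iio [LinearOrder ι] {g : ι} {m : ι → ℕ} :
    m + Pi.single g 1 ∈ exponentsMeeting (Set.Iio g) ↔ m ∈ exponentsMeeting (Set.Iio g) := by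
  refine exists_congr fun h ↦ and_congr_right fun hh ↦ ?_
  simp [Pi.single_eq_of_ne (ne_of_lt hh)]

lemma map_mem_of_forall_basis {κ M N : Type*} [AddCommGroup M] [Module K M] [AddCommGroup N]
    [Module K N] (b : Basis κ K M) (L : M →ₗ[K] N) {p : Submodule K N} (h : ∀ m, L (b m) ∈ p)
    (a : M) : L a ∈ p := by
  have : Submodule.span K (Set.range b) ≤ p.comap L :=
    Submodule.span_le.2 (Set.range_subset_iff.2 h)
  exact this (b.mem_span a)

section Shift

variable [DecidableEq ι] (b : Basis (ι → ℕ) K A) (g : ι)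

/-- The linear map multiplying each basis monomial by the factor with index `g`, inserted at its
place in the ordered product. -/
def shift : A →ₗ[K] A :=
  b.repr.symm.toLinearMap ∘ₗ Finsupp.lmapDomain K K (· + Pi.single g 1) ∘ₗ b.repr.toLinearMap

lemma shift_basis (m : ι → ℕ) : shift b g (b m) = b (m + Pi.single g 1) := by
  simp [shift]

lemma repr_shift_add_single (a : A) (m : ι → ℕ) :
    b.repr (shift b g a) (m + Pi.single g 1) = b.repr a m := by
  simp only [shift, LinearMap.comp_apply, LinearEquiv.coe_coe, LinearEquiv.apply_symm_apply,
    Finsupp.lmapDomain_apply]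
  exact Finsupp.mapDomain_apply (add_left_injective _) _ _

end Shift

lemma mem_span_of_mem_ideal_span [LinearOrder ι] {b : Basis (ι → ℕ) K A} {x : ι → A} {s : Set ι}
    (hs : IsLowerSet s)
    (h : ∀ g ∈ s, ∀ a, a * x g ∈ Submodule.span K (b '' exponentsMeeting (Set.Iic g))) {a : A}
    (ha : a ∈ Ideal.span (x '' s)) : a ∈ Submodule.span K (b '' exponentsMeeting s) := by
  induction ha using Submodule.closure_induction with
  | zero => exact zero_mem _
  | add _ _ _ _ h₁ h₂ => exact add_mem h₁ h₂
  | smul_mem r _ hg =>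
    obtain ⟨g, hg, rfl⟩ := hg
    exact Submodule.span_mono (Set.image_mono (exponentsMeeting_mono (hs.Iic_subset hg))) (h g hg r)

namespace IsPBWBasis

variable [LinearOrder ι] [WellFoundedLT ι] {b : Basis (ι → ℕ) K A} {x : ι → A}

lemma mem_ideal_span (hb : IsPBWBasis b x) {s : Set ι} (hs : IsLowerSet s)
    {m : ι → ℕ} (hm : m ∈ exponentsMeeting s) : b m ∈ Ideal.span (x '' s) := by
  obtain ⟨g, hg, hmg⟩ := hm
  obtain ⟨h, hmh, hmin⟩ := WellFounded.has_min wellFounded_lt {h | m h ≠ 0} ⟨g, hmg⟩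
  have hhs : h ∈ s := hs (not_lt.1 (hmin g hmg)) hg
  have hle : Pi.single h 1 ≤ m :=
    update_le_iff.2 ⟨Nat.one_le_iff_ne_zero.2 hmh, fun i _ ↦ Nat.zero_le _⟩
  rw [← tsub_add_cancel_of_le hle, hb h _ fun i hi ↦ ?_]
  · exact Ideal.mul_mem_left _ _ (Ideal.subset_span ⟨h, hhs, rfl⟩)
  · have : m i = 0 := not_not.1 fun h' ↦ hmin i h' hi
    simp [this]

lemma mul_mem_span (hb : IsPBWBasis b x) (hx : SkewCommute K x) (g : ι) (a : A) :
    a * x g ∈ Submodule.span K (b '' exponentsMeeting (Set.Iic g)) := by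
  induction g using WellFoundedLT.induction generalizing a with
  | ind g ih =>
  refine map_mem_of_forall_basis b (LinearMap.mulRight K (x g)) (fun m ↦ ?_) a
  rw [LinearMap.mulRight_apply]
  by_cases hm : m ∈ exponentsMeeting (Set.Iio g)
  · have hmem := hx.mul_smul_mem_span_image (isLowerSet_Iio g) g 1 _
      (hb.mem_ideal_span (isLowerSet_Iio g) hm)
    rw [one_smul] at hmem
    exact Submodule.span_mono (Set.image_mono (exponentsMeeting_mono Set.Iio_subset_Iic_self))
      (mem_span_of_mem_ideal_span (isLowerSet_Iio g) ih hmem)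
  · rw [← hb g m fun h hh ↦ not_not.1 fun hne ↦ hm ⟨h, hh, hne⟩]
    exact Submodule.subset_span ⟨_, ⟨g, le_rfl, by simp⟩, rfl⟩

lemma restrictScalars_ideal_span (hb : IsPBWBasis b x) (hx : SkewCommute K x) {s : Set ι}
    (hs : IsLowerSet s) :
    (Ideal.span (x '' s)).restrictScalars K = Submodule.span K (b '' exponentsMeeting s) := by
  refine le_antisymm (fun a ha ↦ ?_) (Submodule.span_le.2 ?_)
  · exact mem_span_of_mem_ideal_span hs (fun g _ ↦ hb.mul_mem_span hx g) ha
  · rintro _ ⟨m, hm, rfl⟩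
    exact hb.mem_ideal_span hs hm

lemma mem_ideal_span_iff (hb : IsPBWBasis b x) (hx : SkewCommute K x) {s : Set ι}
    (hs : IsLowerSet s) (a : A) :
    a ∈ Ideal.span (x '' s) ↔ ∀ m ∉ exponentsMeeting s, b.repr a m = 0 := by
  rw [← Submodule.restrictScalars_mem K, hb.restrictScalars_ideal_span hx hs, b.mem_span_image,
    Finsupp.support_subset_iff]

lemma mul_sub_shift_mem (hb : IsPBWBasis b x) (hx : SkewCommute K x) (g : ι) (a : A) :
    a * x g - shift b g a ∈ Ideal.span (x '' Set.Iio g) := by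
  refine map_mem_of_forall_basis b (LinearMap.mulRight K (x g) - shift b g)
    (p := (Ideal.span (x '' Set.Iio g)).restrictScalars K) (fun m ↦ ?_) a
  rw [LinearMap.sub_apply, LinearMap.mulRight_apply, shift_basis]
  by_cases hm : m ∈ exponentsMeeting (Set.Iio g)
  · have hmem := hx.mul_smul_mem_span_image (isLowerSet_Iio g) g 1 _
      (hb.mem_ideal_span (isLowerSet_Iio g) hm)
    rw [one_smul] at hmem
    exact sub_mem hmem (hb.mem_ideal_span (isLowerSet_Iio g)
      (add_single_mem_exponentsMeeting_Iio.2 hm))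
  · rw [hb g m fun h hh ↦ not_not.1 fun hne ↦ hm ⟨h, hh, hne⟩, sub_self]
    exact zero_mem _

theorem isSkewRegular (hb : IsPBWBasis b x) (hx : SkewCommute K x) : IsSkewRegular K x where
  skewCommute := hx
  mem_of_mul_mem g a ha := by
    have hshift : shift b g a ∈ Ideal.span (x '' Set.Iio g) :=
      (Submodule.sub_mem_iff_right _ ha).1 (hb.mul_sub_shift_mem hx g a)
    rw [hb.mem_ideal_span_iff hx (isLowerSet_Iio g)] at hshift ⊢
    intro m hm
    rw [← repr_shift_add_single b g]
    exact hshift _ (add_single_mem_exponentsMeeting_Iio.not.2 hm)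

end IsPBWBasis

end PBWBasis

section Presentation

variable {n : ℕ} {q : ℂ} {B : Type*} [Semiring B] [Algebra ℂ B]

/-- The relations satisfied by a block `z_i, x_i, y_i` of generators of `𝔥_n(q)`, listed in this
order as `g 0, g 1, g 2`. -/
structure IsHeisenbergTriple (q : ℂ) (g : Fin 3 → B) : Prop where
  x_mul_z : g 1 * g 0 = q • (g 0 * g 1)
  y_mul_z : g 2 * g 0 = q⁻¹ • (g 0 * g 2)
  x_mul_y : g 1 * g 2 = q⁻¹ • (g 2 * g 1) + g 0

lemma IsHeisenbergTriple.map {B' : Type*} [Semiring B'] [Algebra ℂ B'] {g : Fin 3 → B}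
    (hg : IsHeisenbergTriple q g) (f : B →ₐ[ℂ] B') : IsHeisenbergTriple q fun k ↦ f (g k) where
  x_mul_z := by rw [← map_mul, hg.x_mul_z, map_smul, map_mul]
  y_mul_z := by rw [← map_mul, hg.y_mul_z, map_smul, map_mul]
  x_mul_y := by rw [← map_mul, hg.x_mul_y, map_add, map_smul, map_mul]

variable (n q) in
/-- The generators of `𝔥_n(q)`, sorted into the blocks `z_i, x_i, y_i`. -/
def gen (i : Fin n) : Fin 3 → H n q :=
  ![Z n q i, X n q i, Y n q i]

lemma isHeisenbergTriple_gen (i : Fin n) : IsHeisenbergTriple q (gen n q i) where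
  x_mul_z := by
    simpa [gen, X, Z] using RingQuot.mkAlgHom_rel ℂ (Rel.xz (q := q) i)
  y_mul_z := by
    simpa [gen, Y, Z] using RingQuot.mkAlgHom_rel ℂ (Rel.yz (q := q) i)
  x_mul_y := by
    simpa [gen, X, Y, Z] using RingQuot.mkAlgHom_rel ℂ (Rel.xy (q := q) i)

lemma commute_gen : Pairwise fun i j : Fin n ↦ ∀ k l, Commute (gen n q i k) (gen n q j l) := by
  intro i j hij k l
  have rel {a b : FreeAlgebra ℂ (GenIdx n)} (h : Rel n q (a * b) (b * a)) :
      Commute (RingQuot.mkAlgHom ℂ (Rel n q) a) (RingQuot.mkAlgHom ℂ (Rel n q) b) := by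
    simpa only [map_mul] using! RingQuot.mkAlgHom_rel ℂ h
  fin_cases k <;> fin_cases l
  · exact rel (.zz i j)
  · exact (rel (.xzne j i hij.symm)).symm
  · exact (rel (.yzne j i hij.symm)).symm
  · exact rel (.xzne i j hij)
  · exact rel (.xx i j)
  · exact rel (.xyne i j hij)
  · exact rel (.yzne i j hij)
  · exact (rel (.xyne j i hij.symm)).symm
  · exact rel (.yy i j)

/-- The homomorphism from `𝔥_n(q)` given by commuting blocks of elements satisfying the
relations. -/
def lift (g : Fin n → Fin 3 → B) (hg : ∀ i, IsHeisenbergTriple q (g i))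
    (hcomm : Pairwise fun i j ↦ ∀ k l, Commute (g i k) (g j l)) : H n q →ₐ[ℂ] B :=
  RingQuot.liftAlgHom ℂ
    ⟨FreeAlgebra.lift ℂ (Sum.elim (g · 1) (Sum.elim (g · 2) (g · 0))), fun a b h ↦ by
      have hblock (k : Fin 3) (i j : Fin n) : g i k * g j k = g j k * g i k := by
        obtain rfl | hij := eq_or_ne i j
        · rfl
        · exact hcomm hij k k
      cases h with
      | xx i j => simpa [fX] using hblock 1 i j
      | yy i j => simpa [fY] using hblock 2 i j
      | zz i j => simpa [fZ] using hblock 0 i j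
      | xz i => simpa [fX, fZ] using (hg i).x_mul_z
      | yz i => simpa [fY, fZ] using (hg i).y_mul_z
      | xy i => simpa [fX, fY, fZ] using (hg i).x_mul_y
      | xyne i j hij => simpa [fX, fY] using (hcomm hij 1 2).eq
      | xzne i j hij => simpa [fX, fZ] using (hcomm hij 1 0).eq
      | yzne i j hij => simpa [fY, fZ] using (hcomm hij 2 0).eq⟩

lemma lift_gen (g : Fin n → Fin 3 → B) (hg : ∀ i, IsHeisenbergTriple q (g i))
    (hcomm : Pairwise fun i j ↦ ∀ k l, Commute (g i k) (g j l)) (i : Fin n) (k : Fin 3) :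
    lift g hg hcomm (gen n q i k) = g i k := by
  fin_cases k <;> simp [lift, gen, X, Y, Z, fX, fY, fZ]

lemma algHom_ext {f f' : H n q →ₐ[ℂ] B} (h : ∀ i k, f (gen n q i k) = f' (gen n q i k)) :
    f = f' := by
  refine RingQuot.ringQuot_ext' ℂ _ _ (FreeAlgebra.hom_ext (funext ?_))
  rintro (i | i | i)
  exacts [h i 1, h i 2, h i 0]

lemma adjoin_gen : Algebra.adjoin ℂ (Set.range (Function.uncurry (gen n q))) = ⊤ := by
  have := congr_arg (Subalgebra.map (RingQuot.mkAlgHom ℂ (Rel n q)))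
    (FreeAlgebra.adjoin_range_ι ℂ (GenIdx n))
  rw [AlgHom.map_adjoin, Algebra.map_top, (AlgHom.range_eq_top _).2
    (RingQuot.mkAlgHom_surjective ℂ _), ← Set.range_comp] at this
  refine top_unique (this.ge.trans (Algebra.adjoin_mono ?_))
  rintro _ ⟨i | i | i, rfl⟩
  exacts [⟨(i, 1), rfl⟩, ⟨(i, 2), rfl⟩, ⟨(i, 0), rfl⟩]

lemma eps_gen (i : Fin n) (k : Fin 3) : eps n q (gen n q i k) = 0 := by
  fin_cases k <;> simp [eps, gen, X, Y, Z, fX, fY, fZ]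

end Presentation

section HeisenbergTriple

variable {q : ℂ} {B : Type*} [Semiring B] [Algebra ℂ B] {g : Fin 3 → B}

lemma mul_pow_of_mul_eq_smul {a b : B} {c : ℂ} (h : a * b = c • (b * a)) (n : ℕ) :
    a * b ^ n = c ^ n • (b ^ n * a) := by
  induction n with
  | zero => simp
  | succ n ih =>
    rw [pow_succ, ← mul_assoc, ih, smul_mul_assoc, mul_assoc, h, mul_smul_comm, smul_smul,
      ← pow_succ, mul_assoc]

variable (q) in
/-- The `q`-integer `q ^ (b - 1) + q ^ (b - 3) + ⋯ + q ^ (1 - b)`. -/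
def qInt (b : ℕ) : ℂ :=
  ∑ i ∈ Finset.range b, q ^ i * q⁻¹ ^ (b - 1 - i)

lemma qInt_succ (b : ℕ) : qInt q (b + 1) = q ^ b + q⁻¹ * qInt q b :=
  geom_sum₂_succ_eq q q⁻¹

/-- The ordered monomial `y ^ b * x ^ a * z ^ c`, for exponents `m = (c, a, b)`. -/
def orderedMonomial (g : Fin 3 → B) (m : ℕ × ℕ × ℕ) : B :=
  g 2 ^ m.2.2 * g 1 ^ m.2.1 * g 0 ^ m.1

namespace IsHeisenbergTriple

lemma z_mul_x (hg : IsHeisenbergTriple q g) (hq : q ≠ 0) : g 0 * g 1 = q⁻¹ • (g 1 * g 0) := by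
  rw [hg.x_mul_z, inv_smul_smul₀ hq]

lemma z_mul_y (hg : IsHeisenbergTriple q g) (hq : q ≠ 0) : g 0 * g 2 = q • (g 2 * g 0) := by
  rw [hg.y_mul_z, smul_inv_smul₀ hq]

lemma x_mul_y_pow_succ (hg : IsHeisenbergTriple q g) (hq : q ≠ 0) (b : ℕ) :
    g 1 * g 2 ^ (b + 1) =
      q⁻¹ ^ (b + 1) • (g 2 ^ (b + 1) * g 1) + qInt q (b + 1) • (g 2 ^ b * g 0) := by
  induction b with
  | zero => simp [hg.x_mul_y, qInt]
  | succ b ih =>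
    have hz := mul_pow_of_mul_eq_smul (hg.z_mul_y hq) (b + 1)
    rw [pow_succ' (g 2) (b + 1), ← mul_assoc, hg.x_mul_y, add_mul, hz, smul_mul_assoc, mul_assoc,
      ih, qInt_succ (b + 1), mul_add, smul_add, mul_smul_comm, mul_smul_comm, ← mul_assoc,
      ← mul_assoc, ← pow_succ' (g 2) b]
    module

lemma z_mul_orderedMonomial (hg : IsHeisenbergTriple q g) (hq : q ≠ 0) (c a b : ℕ) :
    g 0 * orderedMonomial g (c, a, b) = (q ^ b * q⁻¹ ^ a) • orderedMonomial g (c + 1, a, b) := by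
  have hx := mul_pow_of_mul_eq_smul (hg.z_mul_x hq) a
  have hy := mul_pow_of_mul_eq_smul (hg.z_mul_y hq) b
  rw [orderedMonomial, ← mul_assoc, ← mul_assoc, hy, smul_mul_assoc, mul_assoc (g 2 ^ b), hx,
    orderedMonomial, pow_succ' _ c]
  simp only [mul_smul_comm, smul_mul_assoc, smul_smul, mul_assoc]

lemma x_mul_orderedMonomial (hg : IsHeisenbergTriple q g) (hq : q ≠ 0) (c a b : ℕ) :
    g 1 * orderedMonomial g (c, a, b) = q⁻¹ ^ b • orderedMonomial g (c, a + 1, b) +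
      (qInt q b * q⁻¹ ^ a) • orderedMonomial g (c + 1, a, b - 1) := by
  have hx := mul_pow_of_mul_eq_smul (hg.z_mul_x hq) a
  cases b with
  | zero => simp [orderedMonomial, qInt, pow_succ', mul_assoc]
  | succ b =>
    simp only [orderedMonomial, Nat.add_sub_cancel]
    rw [← mul_assoc, ← mul_assoc, hg.x_mul_y_pow_succ hq, add_mul, smul_mul_assoc, smul_mul_assoc,
      mul_assoc (g 2 ^ b), hx, pow_succ' _ c, pow_succ' _ a]
    simp only [add_mul, mul_smul_comm, smul_mul_assoc, smul_smul, mul_assoc]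

lemma skewCommute {A : Type*} [Ring A] [Algebra ℂ A] {g : Fin 3 → A} (hg : IsHeisenbergTriple q g)
    (hq : q ≠ 0) : SkewCommute ℂ g := by
  have hz {k : Fin 3} (hk : 0 < k) : g 0 ∈ Ideal.span (g '' Set.Iio k) :=
    Ideal.subset_span ⟨0, hk, rfl⟩
  have of_eq {k l : Fin 3} {c : ℂ} (h : g k * g l = c • (g l * g k)) :
      ∃ c : ℂ, g k * g l - c • (g l * g k) ∈ Ideal.span (g '' Set.Iio k) :=
    ⟨c, by rw [h, sub_self]; exact zero_mem _⟩
  have refl (k : Fin 3) : g k * g k = (1 : ℂ) • (g k * g k) := (one_smul _ _).symm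
  intro k l
  fin_cases k <;> fin_cases l
  · exact of_eq (refl 0)
  · exact of_eq (hg.z_mul_x hq)
  · exact of_eq (hg.z_mul_y hq)
  · exact of_eq hg.x_mul_z
  · exact of_eq (refl 1)
  · refine ⟨q⁻¹, ?_⟩
    simpa [hg.x_mul_y] using hz (k := 1) (by decide)
  · exact of_eq hg.y_mul_z
  · refine ⟨q, ?_⟩
    simpa [hg.x_mul_y, smul_inv_smul₀ hq] using
      Submodule.smul_of_tower_mem _ q (hz (k := 2) (by decide))
  · exact of_eq (refl 2)

end IsHeisenbergTriple

end HeisenbergTriple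

section MonomialModule

open Module

/-- The free module on the exponents `(c, a, b)` of the monomials `y ^ b * x ^ a * z ^ c`. -/
abbrev MonomialModule : Type :=
  ℕ × ℕ × ℕ →₀ ℂ

/-- The operators of `z`, `x`, `y` on the free module on the ordered monomials, obtained by
moving the new factor to its place. -/
def monomialOp (q : ℂ) : Fin 3 → End ℂ MonomialModule :=
  ![Finsupp.linearCombination ℂ fun (c, a, b) ↦ Finsupp.single (c + 1, a, b) (q ^ b * q⁻¹ ^ a),
    Finsupp.linearCombination ℂ fun (c, a, b) ↦ Finsupp.single (c, a + 1, b) (q⁻¹ ^ b) +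
      Finsupp.single (c + 1, a, b - 1) (qInt q b * q⁻¹ ^ a),
    Finsupp.linearCombination ℂ fun (c, a, b) ↦ Finsupp.single (c, a, b + 1) 1]

variable {q : ℂ}

lemma monomialOp_zero_single (c a b : ℕ) (r : ℂ) : monomialOp q 0 (Finsupp.single (c, a, b) r) =
    Finsupp.single (c + 1, a, b) (r * (q ^ b * q⁻¹ ^ a)) := by
  simp [monomialOp, -Finsupp.single_mul]

lemma monomialOp_one_single (c a b : ℕ) (r : ℂ) : monomialOp q 1 (Finsupp.single (c, a, b) r) =
    Finsupp.single (c, a + 1, b) (r * q⁻¹ ^ b) +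
      Finsupp.single (c + 1, a, b - 1) (r * (qInt q b * q⁻¹ ^ a)) := by
  simp [monomialOp, -Finsupp.single_mul]

lemma monomialOp_two_single (c a b : ℕ) (r : ℂ) : monomialOp q 2 (Finsupp.single (c, a, b) r) =
    Finsupp.single (c, a, b + 1) r := by
  simp [monomialOp]

lemma isHeisenbergTriple_monomialOp (hq : q ≠ 0) : IsHeisenbergTriple q (monomialOp q) where
  x_mul_z := by
    refine Finsupp.lhom_ext fun ⟨c, a, b⟩ r ↦ ?_
    simp only [End.mul_apply, LinearMap.smul_apply, monomialOp_zero_single, monomialOp_one_single,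
      map_add, smul_add, Finsupp.smul_single, smul_eq_mul]
    congr 2
    · ring_nf; field_simp
    · cases b with
      | zero => simp [qInt]
      | succ b => rw [Nat.add_sub_cancel]; ring_nf
  y_mul_z := by
    refine Finsupp.lhom_ext fun ⟨c, a, b⟩ r ↦ ?_
    simp only [End.mul_apply, LinearMap.smul_apply, monomialOp_zero_single, monomialOp_two_single,
      Finsupp.smul_single, smul_eq_mul]
    congr 1
    field_simp
    ring
  x_mul_y := by
    refine Finsupp.lhom_ext fun ⟨c, a, b⟩ r ↦ ?_
    simp only [End.mul_apply, LinearMap.add_apply, LinearMap.smul_apply, monomialOp_zero_single,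
      monomialOp_one_single, monomialOp_two_single, map_add, smul_add, Finsupp.smul_single,
      smul_eq_mul, Nat.add_sub_cancel, qInt_succ, add_assoc]
    cases b with
    | zero => simp [qInt, pow_succ, mul_comm]
    | succ b =>
      rw [Nat.add_sub_cancel, ← Finsupp.single_add]
      congr 2 <;> ring

end MonomialModule

section BlockBasis

open Module

variable {q : ℂ} {B : Type*} [Semiring B] [Algebra ℂ B]

/-- The homomorphism from `𝔥₁(q)` given by three elements satisfying its relations. -/
def liftBlock {g : Fin 3 → B} (hg : IsHeisenbergTriple q g) : H 1 q →ₐ[ℂ] B :=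
  lift (fun _ ↦ g) (fun _ ↦ hg) fun i j h ↦ (h (Subsingleton.elim i j)).elim

lemma liftBlock_gen {g : Fin 3 → B} (hg : IsHeisenbergTriple q g) (k : Fin 3) :
    liftBlock hg (gen 1 q 0 k) = g k :=
  lift_gen _ _ _ 0 k

/-- The representation of `𝔥₁(q)` on the free module on its ordered monomials. -/
def monomialRep (hq : q ≠ 0) : H 1 q →ₐ[ℂ] End ℂ MonomialModule :=
  liftBlock (isHeisenbergTriple_monomialOp hq)

variable (q) in
/-- The linear map interpreting exponents as ordered monomials in `𝔥₁(q)`. -/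
def ofMonomials : MonomialModule →ₗ[ℂ] H 1 q :=
  Finsupp.linearCombination ℂ (orderedMonomial (gen 1 q 0))

lemma ofMonomials_single (m : ℕ × ℕ × ℕ) (r : ℂ) :
    ofMonomials q (Finsupp.single m r) = r • orderedMonomial (gen 1 q 0) m :=
  Finsupp.linearCombination_single ℂ r m

lemma ofMonomials_monomialOp (hq : q ≠ 0) (k : Fin 3) (v : MonomialModule) :
    ofMonomials q (monomialOp q k v) = gen 1 q 0 k * ofMonomials q v := by
  suffices ofMonomials q ∘ₗ monomialOp q k =
      LinearMap.mulLeft ℂ (gen 1 q 0 k) ∘ₗ ofMonomials q from DFunLike.congr_fun this v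
  refine Finsupp.lhom_ext fun ⟨c, a, b⟩ r ↦ ?_
  have hg : IsHeisenbergTriple q (gen 1 q 0) := isHeisenbergTriple_gen 0
  simp only [LinearMap.comp_apply, LinearMap.mulLeft_apply, ofMonomials_single, mul_smul_comm]
  match k with
  | 0 => rw [monomialOp_zero_single, ofMonomials_single, hg.z_mul_orderedMonomial hq, mul_smul]
  | 1 =>
    rw [monomialOp_one_single, map_add, ofMonomials_single, ofMonomials_single,
      hg.x_mul_orderedMonomial hq, smul_add, mul_smul, mul_smul]
  | 2 =>
    rw [monomialOp_two_single, ofMonomials_single, orderedMonomial, orderedMonomial, pow_succ',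
      mul_assoc, mul_assoc, mul_assoc]

lemma ofMonomials_monomialRep (hq : q ≠ 0) (a : H 1 q) (v : MonomialModule) :
    ofMonomials q (monomialRep hq a v) = a * ofMonomials q v := by
  have ha : a ∈ Algebra.adjoin ℂ (Set.range (Function.uncurry (gen 1 q))) :=
    adjoin_gen ▸ Algebra.mem_top
  induction ha using Algebra.adjoin_induction generalizing v with
  | mem a ha =>
    obtain ⟨⟨i, k⟩, rfl⟩ := ha
    obtain rfl : i = 0 := Subsingleton.elim _ _
    rw [Function.uncurry_apply_pair, monomialRep, liftBlock_gen, ofMonomials_monomialOp hq]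
  | algebraMap r => rw [AlgHom.commutes, algebraMap_end_apply, map_smul, Algebra.smul_def]
  | add a b _ _ ha hb => rw [map_add, LinearMap.add_apply, map_add, ha, hb, add_mul]
  | mul a b _ _ ha hb => rw [map_mul, End.mul_apply, ha, hb, mul_assoc]

lemma monomialOp_zero_pow (c : ℕ) :
    (monomialOp q 0 ^ c) (Finsupp.single 0 1) = Finsupp.single (c, 0, 0) 1 := by
  induction c with
  | zero => rfl
  | succ c ih => rw [pow_succ', End.mul_apply, ih, monomialOp_zero_single]; simp

lemma monomialOp_one_pow (c a : ℕ) :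
    (monomialOp q 1 ^ a) (Finsupp.single (c, 0, 0) 1) = Finsupp.single (c, a, 0) 1 := by
  induction a with
  | zero => rfl
  | succ a ih => rw [pow_succ', End.mul_apply, ih, monomialOp_one_single]; simp [qInt]

lemma monomialOp_two_pow (c a b : ℕ) :
    (monomialOp q 2 ^ b) (Finsupp.single (c, a, 0) 1) = Finsupp.single (c, a, b) 1 := by
  induction b with
  | zero => rfl
  | succ b ih => rw [pow_succ', End.mul_apply, ih, monomialOp_two_single]

lemma monomialRep_orderedMonomial (hq : q ≠ 0) (m : ℕ × ℕ × ℕ) :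
    monomialRep hq (orderedMonomial (gen 1 q 0) m) (Finsupp.single 0 1) = Finsupp.single m 1 := by
  simp only [orderedMonomial, monomialRep, map_mul, map_pow, liftBlock_gen, End.mul_apply,
    monomialOp_zero_pow, monomialOp_one_pow, monomialOp_two_pow]

/-- The identification of the free module on the ordered monomials with `𝔥₁(q)`. -/
def monomialEquiv (hq : q ≠ 0) : MonomialModule ≃ₗ[ℂ] H 1 q :=
  .ofLinearMap (ofMonomials q)
    (LinearMap.applyₗ (Finsupp.single 0 1) ∘ₗ (monomialRep hq).toLinearMap)
    (LinearMap.ext fun a ↦ by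
      simp [ofMonomials_monomialRep, ofMonomials_single, orderedMonomial])
    (Finsupp.lhom_ext fun m r ↦ by
      simp [ofMonomials_single, monomialRep_orderedMonomial])

/-- The exponents `(c, a, b)` as a function on the block `z, x, y`. -/
def exponentEquiv : ℕ × ℕ × ℕ ≃ (Fin 3 → ℕ) where
  toFun m := ![m.1, m.2.1, m.2.2]
  invFun m := (m 0, m 1, m 2)
  left_inv _ := rfl
  right_inv m := funext fun k ↦ by fin_cases k <;> rfl

/-- The Poincaré–Birkhoff–Witt basis of `𝔥₁(q)`. -/
def blockBasis (hq : q ≠ 0) : Basis (Fin 3 → ℕ) ℂ (H 1 q) :=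
  (Basis.ofRepr (monomialEquiv hq).symm).reindex exponentEquiv

lemma blockBasis_apply (hq : q ≠ 0) (m : Fin 3 → ℕ) :
    blockBasis hq m = gen 1 q 0 2 ^ m 2 * gen 1 q 0 1 ^ m 1 * gen 1 q 0 0 ^ m 0 := by
  rw [blockBasis, Basis.reindex_apply]
  exact (ofMonomials_single _ _).trans (one_smul _ _)

lemma isPBWBasis_blockBasis (hq : q ≠ 0) : IsPBWBasis (blockBasis hq) (gen 1 q 0) := by
  intro k m hm
  simp only [blockBasis_apply, Pi.add_apply]
  fin_cases k
  · simp [pow_succ, mul_assoc]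
  · have h₀ : m 0 = 0 := hm 0 (by decide)
    simp [h₀, pow_succ, mul_assoc]
  · have h₀ : m 0 = 0 := hm 0 (by decide)
    have h₁ : m 1 = 0 := hm 1 (by decide)
    simp [h₀, h₁, pow_succ]

end BlockBasis

section TensorProduct

open scoped TensorProduct

lemma noncommPiCoprod_update {ι M : Type*} [Fintype ι] [DecidableEq ι] [Monoid M] {N : ι → Type*}
    [∀ i, Monoid (N i)] (ψ : ∀ i, N i →* M)
    (hψ : Pairwise fun i j ↦ ∀ a b, Commute (ψ i a) (ψ j b)) (f : ∀ i, N i) (i : ι) (a : N i) :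
    MonoidHom.noncommPiCoprod ψ hψ (Function.update f i a) =
      MonoidHom.noncommPiCoprod ψ hψ (Function.update f i 1) * ψ i a := by
  have : Function.update f i a = Function.update f i 1 * Pi.mulSingle i a := by
    ext j
    obtain rfl | hj := eq_or_ne j i <;> simp [*]
  rw [this, map_mul, MonoidHom.noncommPiCoprod_mulSingle]

variable {ι R S : Type*} [CommSemiring R] [Semiring S] [Algebra R S]
  {A : ι → Type*} [∀ i, Semiring (A i)] [∀ i, Algebra R (A i)]

lemma commute_singleAlgHom [DecidableEq ι] {i j : ι} (hij : i ≠ j) (a : A i) (b : A j) :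
    Commute (PiTensorProduct.singleAlgHom (R := R) i a) (PiTensorProduct.singleAlgHom j b) :=
  (Pi.mulSingle_commute hij a b).tprod

variable [Fintype ι] (φ : ∀ i, A i →ₐ[R] S)
  (hφ : Pairwise fun i j ↦ ∀ a b, Commute (φ i a) (φ j b))

/-- The product of the values of homomorphisms with commuting images, as a multilinear map. -/
def noncommProdMultilinear : MultilinearMap R A S where
  toFun := MonoidHom.noncommPiCoprod (fun i ↦ (φ i : A i →* S)) hφ
  map_update_add' f i a b := by
    have h := noncommPiCoprod_update (fun i ↦ (φ i : A i →* S)) hφ f i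
    rw [h (a + b), h a, h b, ← mul_add]
    exact congr_arg _ (map_add (φ i) a b)
  map_update_smul' f i c a := by
    have h := noncommPiCoprod_update (fun i ↦ (φ i : A i →* S)) hφ f i
    rw [h (c • a), h a, ← mul_smul_comm]
    exact congr_arg _ (map_smul (φ i) c a)

/-- The homomorphism from a tensor product of algebras given by homomorphisms from the factors with
commuting images. -/
def piTensorLift : (⨂[R] i, A i) →ₐ[R] S :=
  PiTensorProduct.liftAlgHom (noncommProdMultilinear φ hφ)
    (map_one (MonoidHom.noncommPiCoprod (fun i ↦ (φ i : A i →* S)) hφ))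
    (map_mul (MonoidHom.noncommPiCoprod (fun i ↦ (φ i : A i →* S)) hφ))

lemma piTensorLift_singleAlgHom [DecidableEq ι] (i : ι) (a : A i) :
    piTensorLift φ hφ (PiTensorProduct.singleAlgHom i a) = φ i a :=
  (PiTensorProduct.lift.tprod _).trans
    (MonoidHom.noncommPiCoprod_mulSingle (ϕ := fun i ↦ (φ i : A i →* S)) (hcomm := hφ) i a)

end TensorProduct

section Blocks

open Module
open scoped TensorProduct

variable {n : ℕ} {q : ℂ}

variable (n q) in
/-- The homomorphism from `𝔥_n(q)` to the tensor product of `n` copies of `𝔥₁(q)` sending the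
`i`-th block of generators to the generators of the `i`-th factor. -/
def toTensor : H n q →ₐ[ℂ] ⨂[ℂ] _ : Fin n, H 1 q :=
  lift (fun i k ↦ PiTensorProduct.singleAlgHom (A := fun _ ↦ H 1 q) i (gen 1 q 0 k))
    (fun i ↦ (isHeisenbergTriple_gen (n := 1) (q := q) 0).map
      (PiTensorProduct.singleAlgHom (R := ℂ) (A := fun _ ↦ H 1 q) i))
    fun _ _ hij _ _ ↦ commute_singleAlgHom hij _ _

lemma toTensor_gen (i : Fin n) (k : Fin 3) : toTensor n q (gen n q i k) =
    PiTensorProduct.singleAlgHom (A := fun _ ↦ H 1 q) i (gen 1 q 0 k) :=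
  lift_gen _ _ _ i k

variable (n q) in
/-- The homomorphism from `𝔥₁(q)` to `𝔥_n(q)` sending the generators to the `i`-th block of
generators. -/
def blockHom (i : Fin n) : H 1 q →ₐ[ℂ] H n q :=
  liftBlock (isHeisenbergTriple_gen i)

lemma blockHom_gen (i : Fin n) (k : Fin 3) : blockHom n q i (gen 1 q 0 k) = gen n q i k :=
  liftBlock_gen _ k

lemma commute_of_forall_commute_gen {B : Type*} [Semiring B] [Algebra ℂ B] (f : H n q →ₐ[ℂ] B)
    {s : B} (h : ∀ i k, Commute s (f (gen n q i k))) (a : H n q) : Commute s (f a) := by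
  have ha : f a ∈ Algebra.adjoin ℂ (f '' Set.range (Function.uncurry (gen n q))) := by
    rw [← AlgHom.map_adjoin, adjoin_gen]
    exact ⟨a, Algebra.mem_top, rfl⟩
  refine Algebra.commute_of_mem_adjoin_of_forall_mem_commute ha ?_
  rintro _ ⟨_, ⟨⟨i, k⟩, rfl⟩, rfl⟩
  exact h i k

lemma commute_blockHom : Pairwise fun i j : Fin n ↦ ∀ a b : H 1 q,
    Commute (blockHom n q i a) (blockHom n q j b) := by
  intro i j hij a
  refine commute_of_forall_commute_gen _ fun i' l ↦ Commute.symm ?_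
  refine commute_of_forall_commute_gen _ (fun j' k ↦ ?_) a
  obtain rfl : i' = 0 := Subsingleton.elim _ _
  obtain rfl : j' = 0 := Subsingleton.elim _ _
  rw [blockHom_gen, blockHom_gen]
  exact (commute_gen hij k l).symm

/-- `𝔥_n(q)` is the tensor product of `n` copies of `𝔥₁(q)`. -/
def tensorEquiv : H n q ≃ₐ[ℂ] ⨂[ℂ] _ : Fin n, H 1 q :=
  AlgEquiv.ofAlgHom (toTensor n q) (piTensorLift (blockHom n q) commute_blockHom)
    (PiTensorProduct.algHom_ext fun i ↦ algHom_ext fun j k ↦ by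
      obtain rfl : j = 0 := Subsingleton.elim _ _
      rw [AlgHom.comp_apply, AlgHom.comp_apply, piTensorLift_singleAlgHom, blockHom_gen,
        toTensor_gen]
      rfl)
    (algHom_ext fun i k ↦ by
      rw [AlgHom.comp_apply, toTensor_gen, piTensorLift_singleAlgHom, blockHom_gen]
      rfl)

lemma tensorEquiv_symm_singleAlgHom (i : Fin n) (k : Fin 3) :
    tensorEquiv.symm (PiTensorProduct.singleAlgHom (A := fun _ ↦ H 1 q) i (gen 1 q 0 k)) =
      gen n q i k :=
  (tensorEquiv (n := n)).symm_apply_eq.2 (toTensor_gen i k).symm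

variable (n q) in
/-- All the generators of `𝔥_n(q)`, ordered lexicographically, first by blocks. -/
def gens (p : Fin n ×ₗ Fin 3) : H n q :=
  gen n q (ofLex p).1 (ofLex p).2

variable (n) in
/-- The exponents of the monomials in `𝔥_n(q)`, sorted by blocks. -/
def exponentsCurry : (Fin n → Fin 3 → ℕ) ≃ (Fin n ×ₗ Fin 3 → ℕ) :=
  (Equiv.curry _ _ _).symm.trans (toLex.arrowCongr (.refl ℕ))

variable (n) in
/-- The Poincaré–Birkhoff–Witt basis of `𝔥_n(q)`. -/
def pbwBasis (hq : q ≠ 0) : Basis (Fin n ×ₗ Fin 3 → ℕ) ℂ (H n q) :=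
  ((Basis.piTensorProduct fun _ : Fin n ↦ blockBasis hq).map
    tensorEquiv.symm.toLinearEquiv).reindex (exponentsCurry n)

lemma pbwBasis_apply (hq : q ≠ 0) (m : Fin n ×ₗ Fin 3 → ℕ) :
    pbwBasis n hq m =
      tensorEquiv.symm (⨂ₜ[ℂ] i, blockBasis hq fun k ↦ m (toLex (i, k))) := by
  rw [pbwBasis, Basis.reindex_apply, Basis.map_apply, Basis.piTensorProduct_apply]
  rfl

lemma isPBWBasis_pbwBasis (hq : q ≠ 0) : IsPBWBasis (pbwBasis n hq) (gens n q) := by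
  intro p m hm
  obtain ⟨⟨i, k⟩, rfl⟩ := toLex.surjective p
  rw [pbwBasis_apply, pbwBasis_apply, gens, ← tensorEquiv_symm_singleAlgHom, ← map_mul,
    PiTensorProduct.singleAlgHom_apply, MonoidHom.mulSingle_apply, ofLex_toLex,
    PiTensorProduct.tprod_mul_tprod]
  congr 2 with j
  obtain rfl | hj := eq_or_ne j i
  · have hm' : ∀ l < k, m (toLex (j, l)) = 0 := fun l hl ↦
      hm _ (Prod.Lex.toLex_lt_toLex.2 (.inr ⟨rfl, hl⟩))
    rw [Pi.mul_apply, Pi.mulSingle_eq_same,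
      ← isPBWBasis_blockBasis hq k (fun l ↦ m (toLex (j, l))) hm']
    congr 1 with l
    simp [Pi.single_apply]
  · simp [hj]

lemma skewCommute_gens (hq : q ≠ 0) : SkewCommute ℂ (gens n q) := by
  intro p r
  obtain ⟨⟨i, k⟩, rfl⟩ := toLex.surjective p
  obtain ⟨⟨j, l⟩, rfl⟩ := toLex.surjective r
  obtain rfl | hij := eq_or_ne i j
  · obtain ⟨c, hc⟩ := (isHeisenbergTriple_gen i).skewCommute hq k l
    refine ⟨c, Ideal.span_mono ?_ hc⟩
    rintro _ ⟨k', hk', rfl⟩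
    exact ⟨toLex (i, k'), Prod.Lex.toLex_lt_toLex.2 (.inr ⟨rfl, hk'⟩), rfl⟩
  · refine ⟨1, ?_⟩
    have hcomm : gens n q (toLex (i, k)) * gens n q (toLex (j, l)) =
        gens n q (toLex (j, l)) * gens n q (toLex (i, k)) := commute_gen hij k l
    rw [one_smul, hcomm, sub_self]
    exact zero_mem _

end Blocks

section TrivialModule

lemma ker_eq_span_of_adjoin_eq_top {K A ι : Type*} [CommRing K] [Ring A] [Algebra K A]
    (ε : A →ₐ[K] K) {x : ι → A} (hx : Algebra.adjoin K (Set.range x) = ⊤)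
    (hε : ∀ i, ε (x i) = 0) : RingHom.ker ε = Ideal.span (Set.range x) := by
  refine le_antisymm (fun a ha ↦ ?_) (Ideal.span_le.2 (Set.range_subset_iff.2 hε))
  suffices a - algebraMap K A (ε a) ∈ Ideal.span (Set.range x) by
    rwa [RingHom.mem_ker.1 ha, map_zero, sub_zero] at this
  have hmem : a ∈ Algebra.adjoin K (Set.range x) := hx ▸ Algebra.mem_top
  clear ha
  induction hmem using Algebra.adjoin_induction with
  | mem a ha =>
    obtain ⟨i, rfl⟩ := ha
    rw [hε, map_zero, sub_zero]
    exact Ideal.subset_span ⟨i, rfl⟩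
  | algebraMap r => simp
  | add a b _ _ ha hb =>
    rw [map_add, map_add, add_sub_add_comm]
    exact add_mem ha hb
  | mul a b _ _ ha hb =>
    have : a * b - algebraMap K A (ε (a * b)) =
        a * (b - algebraMap K A (ε b)) + algebraMap K A (ε b) * (a - algebraMap K A (ε a)) := by
      rw [mul_sub, mul_sub, Algebra.commutes (ε b) a, map_mul, mul_comm (ε a), map_mul,
        sub_add_sub_cancel]
    rw [this]
    exact add_mem (Ideal.mul_mem_left _ _ hb) (Ideal.mul_mem_left _ _ ha)

variable (n : ℕ) (q : ℂ)

lemma ker_eps : RingHom.ker (eps n q) = Ideal.span (gens n q '' Set.univ) := by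
  rw [Set.image_univ]
  exact ker_eq_span_of_adjoin_eq_top _ adjoin_gen fun p ↦ eps_gen _ _

/-- The augmentation as a linear map onto the trivial module. -/
def epsLinear : H n q →ₗ[H n q] trivMod n q :=
  LinearMap.toSpanSingleton (H n q) (trivMod n q) (1 : ℂ)

lemma epsLinear_apply (a : H n q) : epsLinear n q a = eps n q a :=
  mul_one (eps n q a)

lemma ker_epsLinear : LinearMap.ker (epsLinear n q) = RingHom.ker (eps n q) := by
  ext a
  rw [LinearMap.mem_ker, epsLinear_apply]
  rfl

lemma epsLinear_surjective : Function.Surjective (epsLinear n q) := fun c ↦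
  ⟨algebraMap ℂ (H n q) c, (epsLinear_apply n q _).trans ((eps n q).commutes c)⟩

/-- The trivial module is the quotient of `𝔥_n(q)` by the left ideal spanned by the generators. -/
def quotSpanEquivTrivMod : quotSpan (gens n q) Set.univ ≃ₗ[H n q] trivMod n q :=
  (Submodule.quotEquivOfEq _ _ ((ker_epsLinear n q).trans (ker_eps n q)).symm).trans
    ((epsLinear n q).quotKerEquivOfSurjective (epsLinear_surjective n q))

lemma gens_smul_trivMod (p : Fin n ×ₗ Fin 3) (t : trivMod n q) : gens n q p • t = 0 := by
  obtain ⟨a, rfl⟩ := epsLinear_surjective n q t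
  rw [← map_smul, epsLinear_apply, smul_eq_mul, map_mul, gens, eps_gen, zero_mul]
  rfl

instance : Nontrivial (trivMod n q) := inferInstanceAs (Nontrivial ℂ)

theorem trivial_module_projective_dimension_general (hq : q ≠ 0) :
    projectiveDimension (trivMod n q) = (3 * n : ℕ) := by
  have hreg := (isPBWBasis_pbwBasis (n := n) hq).isSkewRegular (skewCommute_gens hq)
  rw [← projectiveDimension_eq_of_iso (quotSpanEquivTrivMod n q).toModuleIso,
    hreg.projectiveDimension_quotSpan_univ (gens_smul_trivMod n q)]
  simp [mul_comm]

end TrivialModule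

/-- For `n ≥ 1` and `q ∈ ℂ` nonzero and not a root of unity, the trivial
module `ℂ_ε` has projective dimension exactly `3n`: it admits a projective resolution of
length `3n` but no projective resolution of length `3n - 1`. -/
theorem trivial_module_projective_dimension (n : ℕ) (hn : 1 ≤ n) (q : ℂ) (hq : q ≠ 0)
    (hq' : NotRootOfUnity q) :
    HasProjResLengthLE (trivMod n q) (3 * n) ∧
      ¬ HasProjResLengthLE (trivMod n q) (3 * n - 1) := by
  have hpd := trivial_module_projective_dimension_general n q hq
  simp only [hasProjResLengthLE_iff, hpd, Nat.cast_le]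
  omega

end QHeisenberg
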